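/- arXiv:2405.11005 — 3 statements merged into one kernel-verified Lean document; each statement's English description precedes it below -/
import Mathlib

section
/- Let f : ℝⁿ × ℝᵐ → ℝⁿ be a map whose increment g(x,u) := f(x,u) − x is L-Lipschitz in its first argument with constant L > 0, i.e. ‖g(x₁,u) − g(x₂,u)‖ ≤ L‖x₁ − x₂‖ for all x₁, x₂ ∈ ℝⁿ and u ∈ ℝᵐ (Euclidean norms). Let η ≥ 0, let u : ℕ → ℝᵐ be a control sequence, let ω : ℕ → ℝⁿ satisfy ‖ω(k)‖ ≤ η for all k, and let x, x̂ : ℕ → ℝⁿ satisfy x(k+1) = f(x(k), u(k)) + ω(k), x̂(k+1) = f(x̂(k), u(k)), and x(0) = x̂(0). Then for every l ∈ ℕ, ‖x(l) − x̂(l)‖ ≤ (η/L)·((1 + L)^l − 1). -/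
/-- Lemma 1 in Euclidean norm: deviation between the disturbed and nominal trajectories
under identical open-loop controls. -/
theorem disturbed_nominal_error_bound (n m : ℕ)
    (f : EuclideanSpace ℝ (Fin n) → EuclideanSpace ℝ (Fin m) → EuclideanSpace ℝ (Fin n))
    (L : ℝ) (hL : 0 < L)
    (hLip : ∀ (x₁ x₂ : EuclideanSpace ℝ (Fin n)) (u : EuclideanSpace ℝ (Fin m)),
      ‖(f x₁ u - x₁) - (f x₂ u - x₂)‖ ≤ L * ‖x₁ - x₂‖)
    (η : ℝ) (hη : 0 ≤ η)
    (u : ℕ → EuclideanSpace ℝ (Fin m))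
    (ω : ℕ → EuclideanSpace ℝ (Fin n)) (hω : ∀ k, ‖ω k‖ ≤ η)
    (x xhat : ℕ → EuclideanSpace ℝ (Fin n))
    (hx : ∀ k, x (k + 1) = f (x k) (u k) + ω k)
    (hxhat : ∀ k, xhat (k + 1) = f (xhat k) (u k))
    (h0 : x 0 = xhat 0) :
    ∀ l : ℕ, ‖x l - xhat l‖ ≤ (η / L) * ((1 + L) ^ l - 1) := by
  intro l
  induction l with
  | zero => simp [h0]
  | succ k ih =>
    have hsplit : x (k + 1) - xhat (k + 1) =
        (x k - xhat k) + ((f (x k) (u k) - x k) - (f (xhat k) (u k) - xhat k)) + ω k := by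
      rw [hx, hxhat]
      abel
    calc ‖x (k + 1) - xhat (k + 1)‖
        ≤ ‖x k - xhat k‖ + ‖(f (x k) (u k) - x k) - (f (xhat k) (u k) - xhat k)‖ + ‖ω k‖ := by
          rw [hsplit]
          exact norm_add₃_le
      _ ≤ ‖x k - xhat k‖ + L * ‖x k - xhat k‖ + η := by
          gcongr
          · exact hLip _ _ _
          · exact hω k
      _ = (1 + L) * ‖x k - xhat k‖ + η := by ring
      _ ≤ (1 + L) * ((η / L) * ((1 + L) ^ k - 1)) + η := by gcongr
      _ = (η / L) * ((1 + L) ^ (k + 1) - 1) := by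
          field_simp
          ring
end

section
/- Let f : ℝⁿ × ℝᵐ → ℝⁿ be a map whose increment g(x,u) := f(x,u) − x is L-Lipschitz in its first argument with constant L > 0, and let h : ℝⁿ → ℝⁿ be a map such that x ↦ h(x) − x is L_r-Lipschitz with constant L_r ≥ 0 (Euclidean norms). Let η ≥ 0, H ≥ 1 and M ∈ ℕ, let u : ℕ → ℝᵐ, let ω : ℕ → ℝⁿ satisfy ‖ω(k)‖ ≤ η for all k, and let x, x̂ : ℕ → ℝⁿ satisfy x(k+1) = f(x(k), u(k)) + ω(k) and x̂(k+1) = f(x̂(k), u(k)) for all k, with x(0) = x̂(0). Define y, z : ℕ → ℝⁿ by y(0) = x(H−1), z(0) = x̂(H−1); y(j+1) = f(y(j), u(H−1+j)) and z(j+1) = f(z(j), u(H−1+j)) for 0 ≤ j < M; and y(j+1) = h(y(j)), z(j+1) = h(z(j)) for j ≥ M. Then for every l ∈ ℕ, ‖y(M+l) − z(M+l)‖ ≤ (η/L)·((1 + L)^{H−1} − 1) · (1 + L)^M · (1 + L_r)^l. -/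
/-- A map whose increment `φ a - a` is `C`-Lipschitz expands distances by at most `1 + C`. -/
theorem norm_sub_le_of_increment_le {E : Type*} [SeminormedAddCommGroup E] {C : ℝ} {a b a' b' : E}
    (hC : ‖(a' - a) - (b' - b)‖ ≤ C * ‖a - b‖) : ‖a' - b'‖ ≤ (1 + C) * ‖a - b‖ := by
  calc ‖a' - b'‖ = ‖(a - b) + ((a' - a) - (b' - b))‖ := by congr 1; abel
    _ ≤ ‖a - b‖ + ‖(a' - a) - (b' - b)‖ := norm_add_le _ _
    _ ≤ (1 + C) * ‖a - b‖ := by linarith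

/-- Discrete Grönwall bound with constant growth rate and constant forcing. -/
theorem le_of_affine_recurrence {d : ℕ → ℝ} {L η : ℝ} (hL : 0 < L) (hzero : d 0 ≤ 0)
    (hstep : ∀ k, d (k + 1) ≤ (1 + L) * d k + η) (k : ℕ) :
    d k ≤ η / L * ((1 + L) ^ k - 1) := by
  induction k with
  | zero => simpa using hzero
  | succ k ih =>
    calc d (k + 1) ≤ (1 + L) * d k + η := hstep k
      _ ≤ (1 + L) * (η / L * ((1 + L) ^ k - 1)) + η := by gcongr
      _ = η / L * ((1 + L) ^ (k + 1) - 1) := by field_simp; ring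

/-- Lemma 4 (in Euclidean norm): the candidate trajectory initialized at the actual disturbed
state `x (H−1)` and the terminal trajectory initialized at the nominal predicted state
`x̂ (H−1)`, propagated by the nominal dynamics for `M` steps and then by the closed-loop
dynamics, are at distance at most `(η/L)·((1+L)^{H−1} − 1)·(1+L)^M·(1+Lr)^l`. -/
theorem terminal_candidate_deviation (n m : ℕ)
    (f : EuclideanSpace ℝ (Fin n) → EuclideanSpace ℝ (Fin m) → EuclideanSpace ℝ (Fin n))
    (L : ℝ) (hL : 0 < L)
    (hLipf : ∀ (x₁ x₂ : EuclideanSpace ℝ (Fin n)) (u : EuclideanSpace ℝ (Fin m)),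
      ‖(f x₁ u - x₁) - (f x₂ u - x₂)‖ ≤ L * ‖x₁ - x₂‖)
    (h : EuclideanSpace ℝ (Fin n) → EuclideanSpace ℝ (Fin n))
    (Lr : ℝ) (hLr : 0 ≤ Lr)
    (hLiph : ∀ x₁ x₂ : EuclideanSpace ℝ (Fin n),
      ‖(h x₁ - x₁) - (h x₂ - x₂)‖ ≤ Lr * ‖x₁ - x₂‖)
    (η : ℝ) (hη : 0 ≤ η) (H : ℕ) (hH : 1 ≤ H) (M : ℕ)
    (u : ℕ → EuclideanSpace ℝ (Fin m))
    (ω : ℕ → EuclideanSpace ℝ (Fin n)) (hω : ∀ k, ‖ω k‖ ≤ η)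
    (x xhat : ℕ → EuclideanSpace ℝ (Fin n))
    (hx : ∀ k, x (k + 1) = f (x k) (u k) + ω k)
    (hxhat : ∀ k, xhat (k + 1) = f (xhat k) (u k))
    (h0 : x 0 = xhat 0)
    (y z : ℕ → EuclideanSpace ℝ (Fin n))
    (hy0 : y 0 = x (H - 1)) (hz0 : z 0 = xhat (H - 1))
    (hyf : ∀ j, j < M → y (j + 1) = f (y j) (u (H - 1 + j)))
    (hzf : ∀ j, j < M → z (j + 1) = f (z j) (u (H - 1 + j)))
    (hyh : ∀ j, M ≤ j → y (j + 1) = h (y j))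
    (hzh : ∀ j, M ≤ j → z (j + 1) = h (z j)) :
    ∀ l : ℕ, ‖y (M + l) - z (M + l)‖
      ≤ (η / L) * ((1 + L) ^ (H - 1) - 1) * (1 + L) ^ M * (1 + Lr) ^ l := by
  have hgronwall : ‖x (H - 1) - xhat (H - 1)‖ ≤ η / L * ((1 + L) ^ (H - 1) - 1) := by
    refine le_of_affine_recurrence (d := fun k => ‖x k - xhat k‖) hL (by simp [h0]) (fun k => ?_) _
    calc ‖x (k + 1) - xhat (k + 1)‖
        = ‖(f (x k) (u k) - f (xhat k) (u k)) + ω k‖ := by rw [hx, hxhat]; congr 1; abel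
      _ ≤ ‖f (x k) (u k) - f (xhat k) (u k)‖ + ‖ω k‖ := norm_add_le _ _
      _ ≤ (1 + L) * ‖x k - xhat k‖ + η :=
        add_le_add (norm_sub_le_of_increment_le (hLipf _ _ _)) (hω k)
  have hnominal : ‖y M - z M‖ ≤ (1 + L) ^ M * ‖y 0 - z 0‖ := by
    refine le_geom (u := fun j => ‖y j - z j‖) (by positivity) M fun j hj => ?_
    simp only [hyf j hj, hzf j hj]
    exact norm_sub_le_of_increment_le (hLipf _ _ _)
  intro l
  have hclosed : ‖y (M + l) - z (M + l)‖ ≤ (1 + Lr) ^ l * ‖y M - z M‖ := by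
    refine le_geom (u := fun j => ‖y (M + j) - z (M + j)‖) (by positivity) l fun j _ => ?_
    simp only [← add_assoc, hyh (M + j) (by lia), hzh (M + j) (by lia)]
    exact norm_sub_le_of_increment_le (hLiph _ _)
  rw [hy0, hz0] at hnominal
  calc ‖y (M + l) - z (M + l)‖ ≤ (1 + Lr) ^ l * ‖y M - z M‖ := hclosed
    _ ≤ (1 + Lr) ^ l * ((1 + L) ^ M * (η / L * ((1 + L) ^ (H - 1) - 1))) := by
      gcongr
      exact hnominal.trans (by gcongr)
    _ = _ := by ring
end

section
/- Let P and Q̄ be real symmetric n×n matrices with P positive definite and Q̄ positive semidefinite, set ρ := λmin(Q̄)/λmax(P), and assume ρ ≤ 1. Let f > 0 and Φ ≥ 0 be real numbers and m ∈ ℕ, and suppose (√(1 − ρ))^m ≤ f/(f + Φ). Let x : ℕ → ℝⁿ be a sequence satisfying x(l+1)ᵀ P x(l+1) − x(l)ᵀ P x(l) ≤ − x(l)ᵀ Q̄ x(l) for every l ∈ ℕ, and suppose √(x(0)ᵀ P x(0)) ≤ f + Φ. Then √(x(m)ᵀ P x(m)) ≤ f. -/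
open Matrix

namespace Matrix.IsHermitian

variable {ι : Type*} [Fintype ι] [DecidableEq ι] {A : Matrix ι ι ℝ}

theorem exists_dotProduct_mulVec_eq_sum_eigenvalues (hA : A.IsHermitian) (v : ι → ℝ) :
    ∃ y : ι → ℝ, v ⬝ᵥ A *ᵥ v = ∑ i, hA.eigenvalues i * y i ^ 2 ∧ v ⬝ᵥ v = ∑ i, y i ^ 2 := by
  set U : Matrix ι ι ℝ := (hA.eigenvectorUnitary : Matrix ι ι ℝ)
  have hUU : U * Uᵀ = 1 := by
    have := Unitary.coe_mul_star_self hA.eigenvectorUnitary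
    simpa [star_eq_conjTranspose] using this
  have hspec : A = U * diagonal hA.eigenvalues * Uᵀ := by
    have := hA.spectral_theorem
    rw [Unitary.conjStarAlgAut_apply] at this
    simpa [star_eq_conjTranspose, Function.comp_def] using this
  have key (B : Matrix ι ι ℝ) : v ⬝ᵥ (U * B * Uᵀ) *ᵥ v = (Uᵀ *ᵥ v) ⬝ᵥ B *ᵥ (Uᵀ *ᵥ v) := by
    rw [← mulVec_mulVec, ← mulVec_mulVec, dotProduct_mulVec, ← mulVec_transpose]
  refine ⟨Uᵀ *ᵥ v, ?_, ?_⟩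
  · conv_lhs => rw [hspec]
    rw [key]
    simp only [dotProduct, mulVec_diagonal]
    exact Finset.sum_congr rfl fun i _ => by ring
  · have h := key 1
    rw [mul_one, hUU, one_mulVec, one_mulVec] at h
    rw [h]
    simp only [dotProduct, sq]

theorem mul_dotProduct_self_le (hA : A.IsHermitian) {c : ℝ} (hc : ∀ i, c ≤ hA.eigenvalues i)
    (v : ι → ℝ) : c * (v ⬝ᵥ v) ≤ v ⬝ᵥ A *ᵥ v := by
  obtain ⟨y, hAv, hv⟩ := hA.exists_dotProduct_mulVec_eq_sum_eigenvalues v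
  rw [hAv, hv, Finset.mul_sum]
  gcongr with i
  exact hc i

theorem dotProduct_mulVec_le (hA : A.IsHermitian) {c : ℝ} (hc : ∀ i, hA.eigenvalues i ≤ c)
    (v : ι → ℝ) : v ⬝ᵥ A *ᵥ v ≤ c * (v ⬝ᵥ v) := by
  obtain ⟨y, hAv, hv⟩ := hA.exists_dotProduct_mulVec_eq_sum_eigenvalues v
  rw [hAv, hv, Finset.mul_sum]
  gcongr with i
  exact hc i

end Matrix.IsHermitian



/-- Terminal-constraint feasibility: if `(√(1−ρ))^m ≤ f/(f+Φ)` and `‖x 0‖_P ≤ f + Φ`, then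
under the per-step decrease the state after `m` steps satisfies `‖x m‖_P ≤ f`. -/
theorem terminal_constraint_feasibility (n : ℕ) (P Qbar : Matrix (Fin n) (Fin n) ℝ)
    (hP : P.PosDef) (hQ : Qbar.PosSemidef)
    (lminQ lmaxP ρ : ℝ)
    (hlmin : IsLeast (Set.range hQ.1.eigenvalues) lminQ)
    (hlmax : IsGreatest (Set.range hP.1.eigenvalues) lmaxP)
    (hρ : ρ = lminQ / lmaxP) (hρ1 : ρ ≤ 1)
    (f Φ : ℝ) (hf : 0 < f) (hΦ : 0 ≤ Φ) (m : ℕ)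
    (hm : (Real.sqrt (1 - ρ)) ^ m ≤ f / (f + Φ))
    (x : ℕ → Fin n → ℝ)
    (hdec : ∀ l : ℕ,
      x (l + 1) ⬝ᵥ P.mulVec (x (l + 1)) - x l ⬝ᵥ P.mulVec (x l) ≤ -(x l ⬝ᵥ Qbar.mulVec (x l)))
    (h0 : Real.sqrt (x 0 ⬝ᵥ P.mulVec (x 0)) ≤ f + Φ) :
    Real.sqrt (x m ⬝ᵥ P.mulVec (x m)) ≤ f := by
  have hlmax_pos : 0 < lmaxP := by
    obtain ⟨i, rfl⟩ := hlmax.1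
    exact hP.eigenvalues_pos i
  have hlmin_nonneg : 0 ≤ lminQ := by
    obtain ⟨i, rfl⟩ := hlmin.1
    exact hQ.eigenvalues_nonneg i
  have hρ0 : 0 ≤ ρ := hρ ▸ div_nonneg hlmin_nonneg hlmax_pos.le
  have hρQ (v : Fin n → ℝ) : ρ * (v ⬝ᵥ P *ᵥ v) ≤ v ⬝ᵥ Qbar *ᵥ v :=
    calc ρ * (v ⬝ᵥ P *ᵥ v) ≤ ρ * (lmaxP * (v ⬝ᵥ v)) := by
          gcongr
          exact hP.1.dotProduct_mulVec_le (fun i => hlmax.2 ⟨i, rfl⟩) v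
      _ = lminQ * (v ⬝ᵥ v) := by rw [hρ]; field_simp
      _ ≤ v ⬝ᵥ Qbar *ᵥ v := hQ.1.mul_dotProduct_self_le (fun i => hlmin.2 ⟨i, rfl⟩) v
  have hstep (l : ℕ) : √(x (l + 1) ⬝ᵥ P *ᵥ x (l + 1)) ≤ √(1 - ρ) * √(x l ⬝ᵥ P *ᵥ x l) := by
    rw [← Real.sqrt_mul (sub_nonneg.2 hρ1)]
    exact Real.sqrt_le_sqrt (by linarith [hdec l, hρQ (x l)])
  have hiter : √(x m ⬝ᵥ P *ᵥ x m) ≤ √(1 - ρ) ^ m * √(x 0 ⬝ᵥ P *ᵥ x 0) :=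
    le_geom (u := fun l => √(x l ⬝ᵥ P *ᵥ x l)) (Real.sqrt_nonneg _) m fun l _ => hstep l
  calc √(x m ⬝ᵥ P *ᵥ x m) ≤ √(1 - ρ) ^ m * √(x 0 ⬝ᵥ P *ᵥ x 0) := hiter
    _ ≤ f / (f + Φ) * (f + Φ) := by gcongr
    _ = f := div_mul_cancel₀ f (by positivity)
end
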